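/- arXiv:1411.7467 — 3 statements merged into one kernel-verified Lean document; each statement's English description precedes it below -/
import Mathlib

section
/- For every half-integer γ ≥ 1/2, every j ∈ {−1/2, 0, 1/2, 1, …} and every μ ∈ {−γ, −γ+1, …, γ}, the vector ψ_(μ) ∈ F_γ ⊗ D⁺_j is nonzero, satisfies 𝒥₋ψ_(μ) = 0 (it is a lowest weight vector), satisfies 𝒥₀ψ_(μ) = (j+1+μ)ψ_(μ), and is an eigenvector of the Casimir 𝒬 with eigenvalue q_(μ) = −(j+μ)(j+μ+1). -/
/-!
Statement 0: lowest weight vectors ψ_(μ) in the coupling F_γ ⊗ D⁺_j for sl(2,ℝ).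

Conventions: γ = G/2 with `G : ℕ`, `1 ≤ G`; j = (K-1)/2 with `K : ℕ` (so j ∈ {-1/2,0,1/2,...}).
The space F_γ ⊗ D⁺_j has basis indexed by `(ν, k) : Fin (G+1) × ℕ`, the basis vector
`single (ν,k) 1` representing |γ, ν-γ⟩ ⊗ |j, j+1+k⟩.
-/

noncomputable section

/-- Principal branch of the complex square root. -/
def csqrt (z : ℂ) : ℂ := z ^ ((1 : ℂ) / 2)

/-- C₊(j,m) = i √(j-m) √(j+m+1). -/
def Cp (j m : ℂ) : ℂ := Complex.I * csqrt (j - m) * csqrt (j + m + 1)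

/-- C₋(j,m) = i √(j+m) √(j-m+1). -/
def Cm (j m : ℂ) : ℂ := Complex.I * csqrt (j + m) * csqrt (j - m + 1)

/-- γ = G/2, as a complex number. -/
def gam (G : ℕ) : ℂ := (G : ℂ) / 2

/-- j = (K-1)/2, as a complex number. -/
def jd (K : ℕ) : ℂ := ((K : ℂ) - 1) / 2

/-- μ = ν - γ for ν : Fin (G+1). -/
def muc (G : ℕ) (ν : Fin (G + 1)) : ℂ := ((ν : ℕ) : ℂ) - gam G

/-- m = j + 1 + k for k : ℕ. -/
def md (K : ℕ) (k : ℕ) : ℂ := jd K + 1 + (k : ℂ)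

/-- The vector space F_γ ⊗ D⁺_j. -/
abbrev W (G : ℕ) := (Fin (G + 1) × ℕ) →₀ ℂ

/-- Basis vector with coefficient, with out-of-range indices giving 0. -/
def eV (G : ℕ) (i k : ℤ) (c : ℂ) : W G :=
  if h : 0 ≤ i ∧ i < (G : ℤ) + 1 ∧ 0 ≤ k then
    Finsupp.single ((⟨i.toNat, by omega⟩ : Fin (G + 1)), k.toNat) c
  else 0

/-- 𝒥₀ = J₀ ⊗ 1 + 1 ⊗ J₀. -/
def J0 (G K : ℕ) : W G →ₗ[ℂ] W G :=
  Finsupp.lsum ℂ fun p => LinearMap.toSpanSingleton ℂ (W G)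
    (Finsupp.single p (muc G p.1 + md K p.2))

/-- 𝒥₊ = J₊ ⊗ 1 + 1 ⊗ J₊. -/
def Jp (G K : ℕ) : W G →ₗ[ℂ] W G :=
  Finsupp.lsum ℂ fun p => LinearMap.toSpanSingleton ℂ (W G)
    (eV G ((p.1 : ℕ) + 1) (p.2 : ℕ) (Cp (gam G) (muc G p.1)) +
      eV G (p.1 : ℕ) ((p.2 : ℕ) + 1) (Cp (jd K) (md K p.2)))

/-- 𝒥₋ = J₋ ⊗ 1 + 1 ⊗ J₋. -/
def Jm (G K : ℕ) : W G →ₗ[ℂ] W G :=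
  Finsupp.lsum ℂ fun p => LinearMap.toSpanSingleton ℂ (W G)
    (eV G ((p.1 : ℕ) - 1) (p.2 : ℕ) (Cm (gam G) (muc G p.1)) +
      eV G (p.1 : ℕ) ((p.2 : ℕ) - 1) (Cm (jd K) (md K p.2)))

/-- The Casimir 𝒬 = -𝒥₀(𝒥₀+1) + 𝒥₋𝒥₊. -/
def Qcas (G K : ℕ) : W G →ₗ[ℂ] W G :=
  -(J0 G K ∘ₗ (J0 G K + LinearMap.id)) + Jm G K ∘ₗ Jp G K

/-- The lowest weight vector ψ_(μ), μ = t - γ: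
ψ_(μ) = Σ_{ν=-γ}^{μ} (-1)^{γ+ν} (Π_{σ=-γ}^{ν-1} C₊(j, j+μ-σ)/C₊(γ,σ)) |γ,ν⟩ ⊗ |j, j+1+μ-ν⟩. -/
def psiLW (G K : ℕ) (t : Fin (G + 1)) : W G :=
  ∑ s ∈ Finset.range (t.1 + 1),
    eV G (s : ℤ) ((t.1 : ℤ) - (s : ℤ))
      ((-1 : ℂ) ^ s *
        ∏ r ∈ Finset.range s,
          Cp (jd K) (jd K + ((t.1 : ℕ) : ℂ) - (r : ℂ)) / Cp (gam G) ((r : ℂ) - gam G))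

/-- q_(μ) = -(j+μ)(j+μ+1). -/
def qe (G K : ℕ) (t : Fin (G + 1)) : ℂ :=
  -((jd K + muc G t) * (jd K + muc G t + 1))

/-!
Label the vectors `|γ, i - γ⟩ ⊗ |j, j + 1 + k⟩` by arbitrary integers `i`, `k`, reading them as `0`
when a label is out of range. The formulas for `𝒥₀`, `𝒥₊`, `𝒥₋` then hold for all labels, since the
ladder coefficients vanish wherever an operator would enter the allowed range from outside. So
`C₋(j, m) = C₊(j, m - 1)` and `C₊(j, m)² - C₊(j, m - 1)² = 2m` give `[𝒥₋, 𝒥₊] = 2𝒥₀`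
with no boundary cases.

The coefficients of `ψ` are chosen so that, in `𝒥₋ψ`, the `1 ⊗ J₋` part of each term cancels the
`J₋ ⊗ 1` part of the next one; the sum telescopes to `0`. For a vector of weight `c` killed by `𝒥₋`
the commutation relation gives `𝒥₋𝒥₊ψ = 2cψ`, so `𝒬ψ = (-c(c + 1) + 2c)ψ = -c(c - 1)ψ`, which is
the claimed eigenvalue at `c = j + 1 + μ`.
-/

section Casimir

variable {R M : Type*} [CommRing R] [AddCommGroup M] [Module R M]

lemma casimir_apply_of_lowering_eq_zero {H E F : Module.End R M} (hFE : ⁅F, E⁆ = (2 : R) • H)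
    {v : M} {c : R} (hF : F v = 0) (hH : H v = c • v) :
    (-(H * (H + 1)) + F * E) v = -(c * (c - 1)) • v := by
  have hFEv : F (E v) = (2 * c) • v := by
    have h := LinearMap.congr_fun hFE v
    rwa [LieRing.of_associative_ring_bracket, LinearMap.sub_apply, Module.End.mul_apply,
      Module.End.mul_apply, hF, map_zero, sub_zero, LinearMap.smul_apply, hH, smul_smul] at h
  simp only [LinearMap.add_apply, LinearMap.neg_apply, Module.End.mul_apply, Module.End.one_apply,
    map_add, map_smul, hH, hFEv]
  module

end Casimir

section LadderCoefficients

lemma csqrt_sq (z : ℂ) : csqrt z ^ 2 = z := by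
  simp [csqrt]

lemma Cm_eq_Cp_sub_one (j m : ℂ) : Cm j m = Cp j (m - 1) := by
  rw [Cm, Cp, mul_right_comm]
  ring_nf

lemma Cp_sq (j m : ℂ) : Cp j m ^ 2 = -((j - m) * (j + m + 1)) := by
  rw [Cp, mul_pow, mul_pow, Complex.I_sq, csqrt_sq, csqrt_sq]
  ring

lemma Cp_sq_sub_Cp_sub_one_sq (j m : ℂ) : Cp j m ^ 2 - Cp j (m - 1) ^ 2 = 2 * m := by
  rw [Cp_sq, Cp_sq]
  ring

lemma Cp_eq_zero_iff {j m : ℂ} : Cp j m = 0 ↔ j - m = 0 ∨ j + m + 1 = 0 := by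
  rw [← sq_eq_zero_iff, Cp_sq, neg_eq_zero, mul_eq_zero]

end LadderCoefficients

section Weights

variable (G K : ℕ) (i k : ℤ)

/-- The weight `μ = i - γ`, for an arbitrary integer `i`; it extends `muc`. -/
def finWeight : ℂ := i - gam G

/-- The weight `m = j + 1 + k`, for an arbitrary integer `k`; it extends `md`. -/
def discWeight : ℂ := jd K + 1 + k

lemma muc_eq_finWeight (a : Fin (G + 1)) : muc G a = finWeight G (a : ℕ) := by
  simp [muc, finWeight]

lemma md_eq_discWeight (n : ℕ) : md K n = discWeight K n := by
  simp [md, discWeight]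

lemma finWeight_sub_one : finWeight G (i - 1) = finWeight G i - 1 := by
  simp only [finWeight]
  push_cast
  ring

lemma discWeight_sub_one : discWeight K (k - 1) = discWeight K k - 1 := by
  simp only [discWeight]
  push_cast
  ring

variable {G i}

lemma Cp_finWeight_eq_zero_iff : Cp (gam G) (finWeight G i) = 0 ↔ i = G ∨ i = -1 := by
  have htop : gam G - finWeight G i = ((G - i : ℤ) : ℂ) := by
    simp only [finWeight, gam]
    push_cast
    ring
  have hbot : gam G + finWeight G i + 1 = ((i + 1 : ℤ) : ℂ) := by
    simp only [finWeight]
    push_cast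
    ring
  rw [Cp_eq_zero_iff, htop, hbot, Int.cast_eq_zero, Int.cast_eq_zero]
  omega

lemma Cp_discWeight_neg_one : Cp (jd K) (discWeight K (-1)) = 0 :=
  Cp_eq_zero_iff.2 <| Or.inl <| by simp [discWeight]

end Weights

section Kets

variable {G : ℕ} {i k : ℤ}

/-- The vector `|γ, i - γ⟩ ⊗ |j, j + 1 + k⟩` with arbitrary integer labels, read as `0` unless
`0 ≤ i ≤ G` and `0 ≤ k`. -/
def ket (G : ℕ) (i k : ℤ) : W G := eV G i k 1

lemma eV_eq_smul_ket (c : ℂ) : eV G i k c = c • ket G i k := by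
  rw [ket, eV, eV]
  split_ifs <;> simp

lemma ket_eq_zero (h : ¬(0 ≤ i ∧ i < (G : ℤ) + 1 ∧ 0 ≤ k)) : ket G i k = 0 := dif_neg h

lemma ket_natCast (a : Fin (G + 1)) (n : ℕ) : ket G (a : ℕ) n = Finsupp.single (a, n) 1 :=
  dif_pos ⟨by omega, by omega, by omega⟩

lemma ket_cases (i k : ℤ) :
    (∃ (a : Fin (G + 1)) (n : ℕ), i = (a : ℕ) ∧ k = n) ∨
      ¬(0 ≤ i ∧ i < (G : ℤ) + 1 ∧ 0 ≤ k) := by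
  by_cases h : 0 ≤ i ∧ i < (G : ℤ) + 1 ∧ 0 ≤ k
  · exact .inl ⟨⟨i.toNat, by omega⟩, k.toNat, by simp [h.1], by omega⟩
  · exact .inr h

lemma ket_apply (a : Fin (G + 1)) (n : ℕ) :
    ket G i k (a, n) = if i = (a : ℕ) ∧ k = n then 1 else 0 := by
  obtain ⟨b, m, rfl, rfl⟩ | h := ket_cases (G := G) i k
  · simp [ket_natCast, Finsupp.single_apply, Fin.ext_iff]
  · rw [ket_eq_zero h, if_neg (by omega), Finsupp.coe_zero, Pi.zero_apply]

lemma linearMap_ext_ket {M : Type*} [AddCommMonoid M] [Module ℂ M] {f g : W G →ₗ[ℂ] M}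
    (h : ∀ i k, f (ket G i k) = g (ket G i k)) : f = g :=
  Finsupp.lhom_ext' fun p => LinearMap.ext_ring <| by simpa [ket_natCast] using h (p.1 : ℕ) p.2

end Kets

section LadderOperators

variable (G K : ℕ) (i k : ℤ)

lemma J0_ket : J0 G K (ket G i k) = (finWeight G i + discWeight K k) • ket G i k := by
  obtain ⟨a, n, rfl, rfl⟩ | h := ket_cases (G := G) i k
  · simp [J0, ket_natCast, muc_eq_finWeight, md_eq_discWeight, -Finsupp.single_add]
  · rw [ket_eq_zero h, map_zero, smul_zero]

lemma Jp_ket :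
    Jp G K (ket G i k) = Cp (gam G) (finWeight G i) • ket G (i + 1) k +
      Cp (jd K) (discWeight K k) • ket G i (k + 1) := by
  obtain ⟨a, n, rfl, rfl⟩ | h := ket_cases (G := G) i k
  · simp [Jp, ket_natCast, muc_eq_finWeight, md_eq_discWeight, eV_eq_smul_ket]
  · have hfin : Cp (gam G) (finWeight G i) • ket G (i + 1) k = 0 := by
      obtain rfl | hi := eq_or_ne i (-1)
      · rw [Cp_finWeight_eq_zero_iff.2 (.inr rfl), zero_smul]
      · rw [ket_eq_zero (by omega), smul_zero]
    have hdisc : Cp (jd K) (discWeight K k) • ket G i (k + 1) = 0 := by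
      obtain rfl | hk := eq_or_ne k (-1)
      · rw [Cp_discWeight_neg_one, zero_smul]
      · rw [ket_eq_zero (by omega), smul_zero]
    rw [ket_eq_zero h, map_zero, hfin, hdisc, add_zero]

lemma Jm_ket :
    Jm G K (ket G i k) = Cp (gam G) (finWeight G (i - 1)) • ket G (i - 1) k +
      Cp (jd K) (discWeight K (k - 1)) • ket G i (k - 1) := by
  obtain ⟨a, n, rfl, rfl⟩ | h := ket_cases (G := G) i k
  · simp [Jm, ket_natCast, muc_eq_finWeight, md_eq_discWeight, eV_eq_smul_ket, Cm_eq_Cp_sub_one,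
      finWeight_sub_one, discWeight_sub_one]
  · have hfin : Cp (gam G) (finWeight G (i - 1)) • ket G (i - 1) k = 0 := by
      obtain hi | hi := eq_or_ne (i - 1) G
      · rw [Cp_finWeight_eq_zero_iff.2 (.inl hi), zero_smul]
      · rw [ket_eq_zero (by omega), smul_zero]
    rw [ket_eq_zero h, map_zero, hfin, ket_eq_zero (i := i) (k := k - 1) (by omega), smul_zero,
      add_zero]

lemma lie_Jm_Jp : ⁅Jm G K, Jp G K⁆ = (2 : ℂ) • J0 G K := by
  refine linearMap_ext_ket fun i k => ?_
  have hfin := Cp_sq_sub_Cp_sub_one_sq (gam G) (finWeight G i)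
  have hdisc := Cp_sq_sub_Cp_sub_one_sq (jd K) (discWeight K k)
  simp only [LieRing.of_associative_ring_bracket, LinearMap.sub_apply, Module.End.mul_apply,
    LinearMap.smul_apply, Jp_ket, Jm_ket, J0_ket, map_add, map_smul, add_sub_cancel_right,
    sub_add_cancel, finWeight_sub_one, discWeight_sub_one]
  linear_combination (norm := module) (hfin + hdisc) • ket G i k

end LadderOperators

section LowestWeightVector

variable (G K : ℕ)

/-- The coefficient of `ψ_(μ)`, `μ = t - γ`, at `|γ, s - γ⟩ ⊗ |j, j + 1 + t - s⟩`. -/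
def psiCoeff (t s : ℕ) : ℂ :=
  (-1 : ℂ) ^ s * ∏ r ∈ Finset.range s,
    Cp (jd K) (jd K + (t : ℂ) - (r : ℂ)) / Cp (gam G) ((r : ℂ) - gam G)

lemma psiCoeff_zero (t : ℕ) : psiCoeff G K t 0 = 1 := by
  simp [psiCoeff]

variable {G} in
lemma psiCoeff_succ_mul (t : ℕ) {s : ℕ} (hs : s < G) :
    psiCoeff G K t (s + 1) * Cp (gam G) (finWeight G s) =
      -(psiCoeff G K t s * Cp (jd K) (discWeight K (t - s - 1))) := by
  have hfin : (s : ℂ) - gam G = finWeight G s := by simp [finWeight]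
  have hdisc : jd K + (t : ℂ) - s = discWeight K (t - s - 1) := by
    simp only [discWeight]
    push_cast
    ring
  have hne : Cp (gam G) (finWeight G s) ≠ 0 := Cp_finWeight_eq_zero_iff.not.2 (by omega)
  rw [psiCoeff, psiCoeff, Finset.prod_range_succ, pow_succ, hfin, hdisc]
  field_simp

variable (t : Fin (G + 1))

lemma psiLW_eq_sum_smul_ket :
    psiLW G K t = ∑ s ∈ Finset.range (t + 1), psiCoeff G K t s • ket G s ((t : ℕ) - s) :=
  Finset.sum_congr rfl fun _ _ => eV_eq_smul_ket _

lemma psiLW_apply_zero : psiLW G K t (0, (t : ℕ)) = 1 := by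
  simp [psiLW_eq_sum_smul_ket, Finsupp.finsetSum_apply, ket_apply, psiCoeff_zero]

lemma psiLW_ne_zero : psiLW G K t ≠ 0 := by
  intro h
  simpa [h] using psiLW_apply_zero G K t

lemma J0_psiLW : J0 G K (psiLW G K t) = (jd K + 1 + muc G t) • psiLW G K t := by
  rw [psiLW_eq_sum_smul_ket, map_sum, Finset.smul_sum]
  refine Finset.sum_congr rfl fun s _ => ?_
  have hweight : finWeight G s + discWeight K ((t : ℕ) - s) = jd K + 1 + muc G t := by
    simp only [finWeight, discWeight, muc]
    push_cast
    ring
  rw [map_smul, J0_ket, hweight, smul_comm]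

lemma Jm_psiLW : Jm G K (psiLW G K t) = 0 := by
  let f (s : ℕ) : W G :=
    (psiCoeff G K t s * Cp (gam G) (finWeight G (s - 1))) • ket G (s - 1) ((t : ℕ) - s)
  have hterm : ∀ s ∈ Finset.range (t + 1),
      Jm G K (psiCoeff G K t s • ket G s ((t : ℕ) - s)) = f s - f (s + 1) := by
    intro s hs
    have hf : f (s + 1) = -((psiCoeff G K t s * Cp (jd K) (discWeight K ((t : ℕ) - s - 1))) •
        ket G s ((t : ℕ) - s - 1)) := by
      simp only [f, Nat.cast_add_one, add_sub_cancel_right, ← sub_sub]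
      obtain rfl | hst := eq_or_ne s t
      · rw [ket_eq_zero (by omega), smul_zero, smul_zero, neg_zero]
      · rw [psiCoeff_succ_mul K t (by grind), neg_smul]
    rw [hf, map_smul, Jm_ket]
    module
  have hfirst : f 0 = 0 := by simp [f, ket_eq_zero]
  have hlast : f (t + 1) = 0 := by simp [f, ket_eq_zero]
  rw [psiLW_eq_sum_smul_ket, map_sum, Finset.sum_congr rfl hterm, Finset.sum_range_sub', hfirst,
    hlast, sub_zero]

end LowestWeightVector

/-- Each ψ_(μ) is nonzero, is a lowest weight vector, is a 𝒥₀-eigenvector of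
eigenvalue j+1+μ, and a 𝒬-eigenvector of eigenvalue q_(μ) = -(j+μ)(j+μ+1). -/
theorem psiLW_lowest_weight (G K : ℕ) (hG : 1 ≤ G) (t : Fin (G + 1)) :
    psiLW G K t ≠ 0 ∧
    Jm G K (psiLW G K t) = 0 ∧
    J0 G K (psiLW G K t) = (jd K + 1 + muc G t) • psiLW G K t ∧
    Qcas G K (psiLW G K t) = qe G K t • psiLW G K t := by
  refine ⟨psiLW_ne_zero G K t, Jm_psiLW G K t, J0_psiLW G K t, ?_⟩
  have heigenvalue : qe G K t = -((jd K + 1 + muc G t) * (jd K + 1 + muc G t - 1)) := by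
    rw [qe]
    ring
  rw [heigenvalue]
  exact casimir_apply_of_lowering_eq_zero (lie_Jm_Jp G K) (Jm_psiLW G K t) (J0_psiLW G K t)

end
end

section
/- Let γ ≥ 1/2 be a half-integer and j ∈ ℂ. The 2γ+1 complex numbers q_(μ) := −(j+μ)(j+μ+1), for μ ∈ {−γ, −γ+1, …, γ}, are pairwise distinct if and only if 2j ∉ ℤ, or 2j ∈ ℤ and (j > γ − 1 or j < −γ). -/
/-!
Statement 2: distinctness of the values q_(μ) = -(j+μ)(j+μ+1), μ ∈ {-γ,...,γ}.

Conventions: γ = G/2 with `G : ℕ`, `1 ≤ G`; μ = t - γ for `t : Fin (G+1)`; j ∈ ℂ arbitrary.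
"2j ∈ ℤ" is encoded as `∃ n : ℤ, 2 * j = n`; for such j (necessarily real with j = n/2),
"j > γ-1" is `(n : ℝ) > G - 2` and "j < -γ" is `(n : ℝ) < -G`.
-/

/-- q_(μ) = -(j+μ)(j+μ+1) with μ = t - γ, γ = G/2. -/
noncomputable def qval (G : ℕ) (j : ℂ) (t : Fin (G + 1)) : ℂ :=
  -((j + (((t : ℕ) : ℂ) - (G : ℂ) / 2)) * ((j + (((t : ℕ) : ℂ) - (G : ℂ) / 2)) + 1))

/-!
The difference of two values factors as `q_(μ') - q_(μ) = (μ - μ')(2j + μ + μ' + 1)`, so a collision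
at `μ ≠ μ'` means `2j = -(μ + μ') - 1`. In terms of the indices `t, t' ∈ {0, …, G}` this reads
`2j = G - 1 - (t + t')`, and the sum of two distinct indices takes exactly the values
`1, …, 2G - 1`; hence a collision exists iff `2j` is an integer in `[-G, G - 2]`.
-/

theorem mul_add_one_eq_mul_add_one_iff {R : Type*} [CommRing R] [NoZeroDivisors R] {x y : R} :
    x * (x + 1) = y * (y + 1) ↔ x = y ∨ x + y + 1 = 0 := by
  have factorization : x * (x + 1) - y * (y + 1) = (x - y) * (x + y + 1) := by ring
  rw [← sub_eq_zero, factorization, mul_eq_zero, sub_eq_zero]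

theorem exists_ne_fin_add_eq_iff {N : ℕ} {s : ℤ} :
    (∃ t t' : Fin N, t ≠ t' ∧ ((t : ℕ) : ℤ) + (t' : ℕ) = s) ↔ 1 ≤ s ∧ s ≤ 2 * N - 3 := by
  constructor
  · rintro ⟨t, t', hne, hsum⟩
    omega
  · rintro ⟨hs_pos, hs_le⟩
    rcases le_or_gt s (N - 1) with hs | hs
    · exact ⟨⟨0, by omega⟩, ⟨s.toNat, by omega⟩, by grind, by grind⟩
    · exact ⟨⟨N - 1, by omega⟩, ⟨(s - (N - 1)).toNat, by omega⟩, by grind, by grind⟩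

theorem forall_eq_intCast_imp_iff {R : Type*} [AddGroupWithOne R] [CharZero R] {x : R}
    {P : ℤ → Prop} :
    (∀ n : ℤ, x = n → P n) ↔
      (¬ ∃ n : ℤ, x = n) ∨ ((∃ n : ℤ, x = n) ∧ ∃ n : ℤ, x = n ∧ P n) := by
  by_cases hx : ∃ m : ℤ, x = m
  · obtain ⟨m, rfl⟩ := hx
    simp
  · simp_all

section Field

variable {K : Type*} [Field K]

/-- The number `q_(μ) = -(j+μ)(j+μ+1)` of `qval`, with the same indexing `μ = t - G/2`, for `j` in
an arbitrary field. In characteristic two the junk value `G / 2 = 0` enters the indexing. -/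
def fieldQval (G : ℕ) (j : K) (t : Fin (G + 1)) : K :=
  -((j + (((t : ℕ) : K) - (G : K) / 2)) * ((j + (((t : ℕ) : K) - (G : K) / 2)) + 1))

variable [CharZero K]

theorem fieldQval_eq_iff {G : ℕ} {j : K} {t t' : Fin (G + 1)} :
    fieldQval G j t = fieldQval G j t' ↔
      t = t' ∨ 2 * j = ((G - 1 - ((t : ℕ) + (t' : ℕ)) : ℤ) : K) := by
  rw [fieldQval, fieldQval, neg_inj, mul_add_one_eq_mul_add_one_iff, add_right_inj, sub_left_inj,
    Nat.cast_inj, Fin.val_inj]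
  refine or_congr_right ?_
  push_cast
  constructor <;> intro h <;> linear_combination h

theorem qval_pairwise_distinct_iff_general (G : ℕ) (j : K) :
    Function.Injective (fieldQval G j) ↔
      ∀ n : ℤ, 2 * j = n → n > (G : ℤ) - 2 ∨ n < -(G : ℤ) := by
  constructor
  · intro hinj n hn
    by_contra! hbounds
    obtain ⟨t, t', hne, hsum⟩ :=
      (exists_ne_fin_add_eq_iff (N := G + 1) (s := G - 1 - n)).2 ⟨by omega, by omega⟩
    refine hne (hinj (fieldQval_eq_iff.2 (Or.inr ?_)))
    rw [hsum, sub_sub_cancel, hn]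
  · intro h t t' heq
    by_contra hne
    have hsum := exists_ne_fin_add_eq_iff.1 ⟨t, t', hne, rfl⟩
    have hbounds := h _ ((fieldQval_eq_iff.1 heq).resolve_left hne)
    omega

end Field

/-- The 2γ+1 values q_(μ), μ ∈ {-γ,...,γ}, are pairwise distinct iff
2j ∉ ℤ, or 2j ∈ ℤ and (j > γ-1 or j < -γ). -/
theorem qval_pairwise_distinct_iff (G : ℕ) (hG : 1 ≤ G) (j : ℂ) :
    (∀ t t' : Fin (G + 1), qval G j t = qval G j t' → t = t') ↔
      (¬ ∃ n : ℤ, 2 * j = (n : ℂ)) ∨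
        ((∃ n : ℤ, 2 * j = (n : ℂ)) ∧
          ∃ n : ℤ, 2 * j = (n : ℂ) ∧ ((n : ℝ) > (G : ℝ) - 2 ∨ (n : ℝ) < -(G : ℝ))) := by
  refine (qval_pairwise_distinct_iff_general G j).trans (Iff.trans ?_ forall_eq_intCast_imp_iff)
  exact forall₂_congr fun n _ => by norm_cast
end

section
/- Let γ ≥ 1/2 be a half-integer and j ∈ {−1/2, 0, 1/2, 1, …} with j ≤ γ − 1. Then the restriction Q_{j+1+γ} of the Casimir 𝒬 of F_γ ⊗ D⁺_j to the (2γ+1)-dimensional subspace V_{j+1+γ} is not diagonalizable; consequently 𝒬 is not diagonalizable on F_γ ⊗ D⁺_j. -/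
/-!
Statement 0: lowest weight vectors ψ_(μ) in the coupling F_γ ⊗ D⁺_j for sl(2,ℝ).

Conventions: γ = G/2 with `G : ℕ`, `1 ≤ G`; j = (K-1)/2 with `K : ℕ` (so j ∈ {-1/2,0,1/2,...}).
The space F_γ ⊗ D⁺_j has basis indexed by `(ν, k) : Fin (G+1) × ℕ`, the basis vector
`single (ν,k) 1` representing |γ, ν-γ⟩ ⊗ |j, j+1+k⟩.
-/

noncomputable section

/-- The 𝒥₀-eigenvalue-M subspace V_M of F_γ ⊗ D⁺_j, for M = j+1-γ+M', M' : ℕ: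
it is spanned by the basis vectors |γ,ν-γ⟩⊗|j,j+1+k⟩ with ν + k = M'. -/
def VM (G : ℕ) (M' : ℕ) : Submodule ℂ (W G) :=
  Submodule.span ℂ
    {w : W G | ∃ p : Fin (G + 1) × ℕ, (p.1 : ℕ) + p.2 = M' ∧ w = Finsupp.single p 1}

/-- A linear operator is diagonalizable on an invariant subspace `p` iff `p` is spanned by
eigenvectors of the operator lying in `p`. -/
def DiagOn {V : Type*} [AddCommGroup V] [Module ℂ V]
    (f : V →ₗ[ℂ] V) (p : Submodule ℂ V) : Prop :=
  Submodule.span ℂ {w : V | w ∈ p ∧ ∃ c : ℂ, f w = c • w} = p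

/-!
Write `q = -M₀(M₀ - 1)` for the Casimir value of the lowest weight vector `v = |γ,-γ⟩ ⊗ |j,j+1⟩`,
whose weight is `M₀ = j + 1 - γ`. Since `𝒬` commutes with `𝒥₊`, every `𝒥₊ⁿ v` satisfies
`𝒬 𝒥₊ⁿ v = q 𝒥₊ⁿ v`, and it is nonzero. When `t = 2(γ - j) - 1` is positive, raising `v` exactly `t`
times reaches the reflected weight `1 - M₀`, on which `𝒬 = q + 𝒥₊𝒥₋`. As `𝒥₋` maps each weight space
onto the one below, `𝒥₊ᵗ⁻¹ v = 𝒥₋ w` for some `w` of weight `1 - M₀`, hence `(𝒬 - q) w = 𝒥₊ᵗ v`.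
Applying `𝒥₊ⁿ⁻ᵗ` gives `(𝒬 - q) 𝒥₊ⁿ⁻ᵗ w = 𝒥₊ⁿ v ≠ 0`: a Jordan block of size two in every weight
space `M₀ + n` with `n ≥ t`. The space `V_{j+1+γ}` is the case `n = 2γ`.
-/

section Diagonalizable

open Module Module.End

lemma iSup_eigenspace_inf_maxGenEigenspace_le {R M : Type*} [CommRing R] [IsDomain R]
    [AddCommGroup M] [Module R M] [IsTorsionFree R M] (f : End R M) (c : R) :
    (⨆ μ, f.eigenspace μ) ⊓ f.maxGenEigenspace c ≤ f.eigenspace c := by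
  have hdisj : Disjoint (⨆ (μ) (_ : μ ≠ c), f.eigenspace μ) (f.maxGenEigenspace c) :=
    (f.independent_maxGenEigenspace c).symm.mono_left
      (iSup₂_mono fun _ _ => eigenspace_le_maxGenEigenspace)
  rw [iSup_split_single f.eigenspace c, sup_inf_assoc_of_le _ eigenspace_le_maxGenEigenspace,
    hdisj.eq_bot, sup_bot_eq]

variable {V : Type*} [AddCommGroup V] [Module ℂ V] {f : End ℂ V} {p : Submodule ℂ V}

lemma DiagOn.le_iSup_eigenspace (h : DiagOn f p) : p ≤ ⨆ c, f.eigenspace c := by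
  rw [← show _ = p from h, Submodule.span_le]
  rintro w ⟨-, c, hc⟩
  exact Submodule.mem_iSup_of_mem c (mem_eigenspace_iff.2 hc)

lemma DiagOn.eq_zero_of_jordan_chain (h : DiagOn f p) {c : ℂ} {u v : V} (hu : u ∈ p)
    (hfu : f u = c • u + v) (hfv : f v = c • v) : v = 0 := by
  have hgen : u ∈ f.maxGenEigenspace c :=
    (mem_maxGenEigenspace f c u).2 ⟨2, by simp [pow_two, hfu, hfv]⟩
  have heig := iSup_eigenspace_inf_maxGenEigenspace_le f c ⟨h.le_iSup_eigenspace hu, hgen⟩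
  rwa [mem_eigenspace_iff, hfu, add_eq_left] at heig

end Diagonalizable

section Casimir

variable {A : Type*} [Ring A] {h e f : A}

lemma casimir_eq_raising_mul_lowering (hfe : f * e = e * f + 2 * h) :
    -(h * (h + 1)) + f * e = e * f - h * (h - 1) := by
  rw [hfe]
  noncomm_ring

lemma commute_casimir_raising (hhe : h * e = e * (h + 1)) (hfe : f * e = e * f + 2 * h) :
    Commute (-(h * (h + 1)) + f * e) e := by
  have hswap : h * (h - 1) * e = e * ((h + 1) * h) :=
    calc h * (h - 1) * e = h * (h * e - e) := by noncomm_ring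
      _ = h * e * h := by
        rw [show h * e - e = e * h by rw [hhe, mul_add_one, add_sub_cancel_right], mul_assoc]
      _ = e * ((h + 1) * h) := by rw [hhe, mul_assoc]
  calc (-(h * (h + 1)) + f * e) * e
      = e * f * e - h * (h - 1) * e := by rw [casimir_eq_raising_mul_lowering hfe, sub_mul]
    _ = e * (-(h * (h + 1)) + f * e) := by rw [hswap]; noncomm_ring

end Casimir

lemma csqrt_mul_self (z : ℂ) : csqrt z * csqrt z = z := by
  simp [csqrt, ← pow_two]

lemma csqrt_eq_zero_iff {z : ℂ} : csqrt z = 0 ↔ z = 0 := by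
  simp [csqrt, Complex.cpow_eq_zero_iff]

lemma Cm_eq_zero_iff {j m : ℂ} : Cm j m = 0 ↔ j + m = 0 ∨ j - m + 1 = 0 := by
  simp only [Cm, mul_eq_zero, Complex.I_ne_zero, csqrt_eq_zero_iff, false_or]

lemma Cp_mul_Cm_add_one (j m : ℂ) : Cp j m * Cm j (m + 1) = -((j - m) * (j + m + 1)) := by
  have hCm : Cm j (m + 1) = Complex.I * csqrt (j + m + 1) * csqrt (j - m) := by
    rw [Cm, add_assoc j m 1, show j - (m + 1) + 1 = j - m by ring]
  calc Cp j m * Cm j (m + 1)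
      = Complex.I * Complex.I * (csqrt (j - m) * csqrt (j - m)) *
          (csqrt (j + m + 1) * csqrt (j + m + 1)) := by rw [hCm, Cp]; ring
    _ = -((j - m) * (j + m + 1)) := by
      rw [Complex.I_mul_I, csqrt_mul_self, csqrt_mul_self]; ring

lemma Cm_mul_Cp_sub_one (j m : ℂ) : Cm j m * Cp j (m - 1) = -((j - m + 1) * (j + m)) := by
  have h := Cp_mul_Cm_add_one j (m - 1)
  rw [sub_add_cancel] at h
  linear_combination h

lemma Cp_jd_md_ne_zero (K k : ℕ) : Cp (jd K) (md K k) ≠ 0 := by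
  have hsub : jd K - md K k = -(k + 1 : ℕ) := by rw [md]; push_cast; ring
  have hadd : jd K + md K k + 1 = (K + k + 1 : ℕ) := by rw [md, jd]; push_cast; ring
  rw [Ne, Cp_eq_zero_iff, hsub, hadd, neg_eq_zero, Nat.cast_eq_zero, Nat.cast_eq_zero]
  omega

lemma Cm_jd_md_add_one_ne_zero (K k : ℕ) : Cm (jd K) (md K (k + 1)) ≠ 0 := by
  have hadd : jd K + md K (k + 1) = (K + k + 1 : ℕ) := by rw [md, jd]; push_cast; ring
  have hsub : jd K - md K (k + 1) + 1 = -(k + 1 : ℕ) := by rw [md]; push_cast; ring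
  rw [Ne, Cm_eq_zero_iff, hadd, hsub, neg_eq_zero, Nat.cast_eq_zero, Nat.cast_eq_zero]
  omega

section TensorBasis

variable {G : ℕ}

lemma eV_smul (i k : ℤ) (c : ℂ) : eV G i k c = c • eV G i k 1 := by
  unfold eV
  split_ifs <;> simp

lemma eV_of_not {i k : ℤ} (h : ¬ (0 ≤ i ∧ i < (G : ℤ) + 1 ∧ 0 ≤ k)) (c : ℂ) :
    eV G i k c = 0 := dif_neg h

lemma eV_natCast (p : Fin (G + 1) × ℕ) (c : ℂ) : eV G (p.1 : ℕ) p.2 c = Finsupp.single p c := by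
  rw [eV, dif_pos (by omega)]
  simp

lemma eV_natCast_apply (p : Fin (G + 1) × ℕ) (i k : ℕ) (c : ℂ) :
    eV G i k c p = if (p.1 : ℕ) = i ∧ p.2 = k then c else 0 := by
  by_cases hi : i < G + 1
  · rw [eV_natCast (⟨i, hi⟩, k), Finsupp.single_apply]
    simp [Prod.ext_iff, Fin.ext_iff, eq_comm]
  · rw [eV_of_not (by omega), if_neg (by omega), Finsupp.coe_zero, Pi.zero_apply]

lemma linearMap_ext_eV {f g : W G →ₗ[ℂ] W G}
    (h : ∀ i k : ℤ, f (eV G i k 1) = g (eV G i k 1)) : f = g :=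
  Finsupp.lhom_ext' fun p => LinearMap.ext_ring <| by simpa [eV_natCast] using h (p.1 : ℕ) p.2

variable (K : ℕ)

lemma J0_eV (i k : ℤ) :
    J0 G K (eV G i k 1) = (i - gam G + (jd K + 1 + k)) • eV G i k 1 := by
  by_cases h : 0 ≤ i ∧ i < (G : ℤ) + 1 ∧ 0 ≤ k
  · obtain ⟨hi, hiG, hk⟩ := h
    lift i to ℕ using hi
    lift k to ℕ using hk
    rw [eV_natCast (⟨i, by omega⟩, k)]
    simp [J0, muc, md]
  · rw [eV_of_not h, map_zero, smul_zero]

/-- For indices out of range this holds because `C₊` vanishes whenever a target is in range. -/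
lemma Jp_eV (i k : ℤ) :
    Jp G K (eV G i k 1) = Cp (gam G) (i - gam G) • eV G (i + 1) k 1
      + Cp (jd K) (jd K + 1 + k) • eV G i (k + 1) 1 := by
  by_cases h : 0 ≤ i ∧ i < (G : ℤ) + 1 ∧ 0 ≤ k
  · obtain ⟨hi, hiG, hk⟩ := h
    lift i to ℕ using hi
    lift k to ℕ using hk
    rw [eV_natCast (⟨i, by omega⟩, k), ← eV_smul, ← eV_smul]
    simp [Jp, muc, md]
  · have hleft : Cp (gam G) (i - gam G) • eV G (i + 1) k 1 = 0 := by
      obtain rfl | hi := eq_or_ne i (-1)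
      · rw [Cp_eq_zero_iff.2 (.inr (by push_cast; ring)), zero_smul]
      · rw [eV_of_not (by omega), smul_zero]
    have hright : Cp (jd K) (jd K + 1 + k) • eV G i (k + 1) 1 = 0 := by
      obtain rfl | hk := eq_or_ne k (-1)
      · rw [Cp_eq_zero_iff.2 (.inl (by push_cast; ring)), zero_smul]
      · rw [eV_of_not (by omega), smul_zero]
    rw [eV_of_not h, map_zero, hleft, hright, add_zero]

/-- For indices out of range this holds because `C₋` vanishes whenever a target is in range. -/
lemma Jm_eV (i k : ℤ) :
    Jm G K (eV G i k 1) = Cm (gam G) (i - gam G) • eV G (i - 1) k 1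
      + Cm (jd K) (jd K + 1 + k) • eV G i (k - 1) 1 := by
  by_cases h : 0 ≤ i ∧ i < (G : ℤ) + 1 ∧ 0 ≤ k
  · obtain ⟨hi, hiG, hk⟩ := h
    lift i to ℕ using hi
    lift k to ℕ using hk
    rw [eV_natCast (⟨i, by omega⟩, k), ← eV_smul, ← eV_smul]
    simp [Jm, muc, md]
  · have hleft : Cm (gam G) (i - gam G) • eV G (i - 1) k 1 = 0 := by
      obtain rfl | hi := eq_or_ne i (G + 1)
      · rw [Cm_eq_zero_iff.2 (.inr (by rw [gam]; push_cast; ring)), zero_smul]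
      · rw [eV_of_not (by omega), smul_zero]
    have hright : Cm (jd K) (jd K + 1 + k) • eV G i (k - 1) 1 = 0 := by
      rw [eV_of_not (by omega), smul_zero]
    rw [eV_of_not h, map_zero, hleft, hright, add_zero]

variable (G)

lemma J0_mul_Jp : J0 G K * Jp G K = Jp G K * (J0 G K + 1) := by
  refine linearMap_ext_eV fun i k => ?_
  simp only [Module.End.mul_apply, LinearMap.add_apply, Module.End.one_apply, Jp_eV, J0_eV,
    map_add, map_smul]
  push_cast
  module

lemma Jm_mul_Jp : Jm G K * Jp G K = Jp G K * Jm G K + 2 * J0 G K := by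
  refine linearMap_ext_eV fun i k => ?_
  have hγ_up := Cp_mul_Cm_add_one (gam G) (i - gam G)
  have hγ_down := Cm_mul_Cp_sub_one (gam G) (i - gam G)
  have hj_up := Cp_mul_Cm_add_one (jd K) (jd K + 1 + k)
  have hj_down := Cm_mul_Cp_sub_one (jd K) (jd K + 1 + k)
  rw [sub_add_eq_add_sub] at hγ_up
  rw [sub_right_comm] at hγ_down
  rw [add_assoc _ _ 1] at hj_up
  rw [add_sub_assoc] at hj_down
  simp only [two_mul, Module.End.mul_apply, LinearMap.add_apply, Jp_eV, Jm_eV, J0_eV, map_add,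
    map_smul]
  push_cast
  simp only [add_sub_cancel_right, sub_add_cancel]
  linear_combination (norm := module) (hγ_up - hγ_down + hj_up - hj_down) • eV G i k 1

lemma commute_Qcas_Jp : Commute (Qcas G K) (Jp G K) :=
  commute_casimir_raising (A := Module.End ℂ (W G)) (J0_mul_Jp G K) (Jm_mul_Jp G K)

lemma Qcas_eq_Jp_mul_Jm_sub : Qcas G K = Jp G K * Jm G K - J0 G K * (J0 G K - 1) :=
  casimir_eq_raising_mul_lowering (A := Module.End ℂ (W G)) (Jm_mul_Jp G K)

end TensorBasis

/-- The weight `j + 1 - γ + n` of the space `VM G n`. -/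
def weight (G K n : ℕ) : ℂ := jd K + 1 - gam G + n

/-- The eigenvalue of `𝒬` on the vectors of weight `M` killed by `𝒥₋`. -/
def casimirValue (M : ℂ) : ℂ := -(M * (M - 1))

lemma casimirValue_one_sub (M : ℂ) : casimirValue (1 - M) = casimirValue M := by
  unfold casimirValue
  ring

lemma weight_sub_eq_one_sub_weight_zero {G K : ℕ} (h : K ≤ G) :
    weight G K (G - K) = 1 - weight G K 0 := by
  simp only [weight, jd, gam, Nat.cast_sub h, Nat.cast_zero]
  ring

section WeightSpaces

variable {G K n : ℕ}

lemma VM_le {S : Submodule ℂ (W G)} (h : ∀ i k : ℕ, i + k = n → eV G i k 1 ∈ S) : VM G n ≤ S := by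
  refine Submodule.span_le.2 ?_
  rintro w ⟨p, hp, rfl⟩
  exact eV_natCast p 1 ▸ h _ _ hp

lemma eV_mem_VM {i k : ℤ} (h : i + k = n) : eV G i k 1 ∈ VM G n := by
  by_cases hr : 0 ≤ i ∧ i < (G : ℤ) + 1 ∧ 0 ≤ k
  · obtain ⟨hi, hiG, hk⟩ := hr
    lift i to ℕ using hi
    lift k to ℕ using hk
    exact Submodule.subset_span
      ⟨(⟨i, by omega⟩, k), by exact_mod_cast h, eV_natCast (⟨i, by omega⟩, k) 1⟩
  · rw [eV_of_not hr]
    exact zero_mem _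

lemma J0_apply_of_mem_VM {w : W G} (hw : w ∈ VM G n) : J0 G K w = weight G K n • w := by
  rw [← Module.End.mem_eigenspace_iff]
  refine VM_le (fun i k hik => Module.End.mem_eigenspace_iff.2 ?_) hw
  rw [J0_eV, weight, ← hik]
  push_cast
  module

lemma Jp_mem_VM {w : W G} (hw : w ∈ VM G n) : Jp G K w ∈ VM G (n + 1) := by
  refine VM_le (S := (VM G (n + 1)).comap (Jp G K)) (fun i k hik => ?_) hw
  rw [Submodule.mem_comap, Jp_eV]
  exact add_mem (Submodule.smul_mem _ _ (eV_mem_VM (by push_cast; omega)))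
    (Submodule.smul_mem _ _ (eV_mem_VM (by push_cast; omega)))

lemma Jp_pow_mem_VM {w : W G} (hw : w ∈ VM G n) (s : ℕ) : (Jp G K ^ s) w ∈ VM G (n + s) := by
  induction s with
  | zero => exact hw
  | succ s ih => rw [pow_succ', Module.End.mul_apply]; exact Jp_mem_VM ih

lemma Qcas_apply_of_mem_VM {w : W G} (hw : w ∈ VM G n) :
    Qcas G K w = casimirValue (weight G K n) • w + Jp G K (Jm G K w) := by
  simp only [casimirValue, Qcas_eq_Jp_mul_Jm_sub, LinearMap.sub_apply, Module.End.mul_apply,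
    Module.End.one_apply, map_sub, J0_apply_of_mem_VM hw, map_smul]
  module

/-- In `𝒥₋ |γ,μ⟩ ⊗ |j,m+1⟩` the coefficient of `|γ,μ⟩ ⊗ |j,m⟩` is nonzero and the other term has
first index `μ - 1`, so induction on `μ` reaches every basis vector. -/
lemma VM_le_map_Jm (G K n : ℕ) : VM G n ≤ (VM G (n + 1)).map (Jm G K) := by
  have hJm : ∀ i k : ℕ, i + k = n → Cm (gam G) (i - gam G) • eV G (i - 1) (k + 1 : ℕ) 1 +
      Cm (jd K) (md K (k + 1)) • eV G i k 1 ∈ (VM G (n + 1)).map (Jm G K) := by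
    intro i k hik
    refine ⟨eV G i (k + 1 : ℕ) 1, eV_mem_VM (by omega), ?_⟩
    rw [Jm_eV, md, Int.cast_natCast, Int.cast_natCast, Nat.cast_succ (R := ℤ),
      add_sub_cancel_right]
  refine VM_le fun i => ?_
  induction i with
  | zero =>
    intro k hk
    have h := hJm 0 k hk
    rwa [eV_of_not (by omega), smul_zero, zero_add,
      Submodule.smul_mem_iff _ (Cm_jd_md_add_one_ne_zero K k)] at h
  | succ i ih =>
    intro k hk
    have h := hJm (i + 1) k hk
    rw [Nat.cast_succ (R := ℤ) i, add_sub_cancel_right] at h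
    have hprev := ih (k + 1) (by omega)
    rwa [Submodule.add_mem_iff_right _ (Submodule.smul_mem _ _ hprev),
      Submodule.smul_mem_iff _ (Cm_jd_md_add_one_ne_zero K k)] at h

end WeightSpaces

/-- The vector `|γ,-γ⟩ ⊗ |j,j+1⟩` of lowest weight. -/
def lowestVector (G : ℕ) : W G := eV G 0 0 1

lemma lowestVector_mem_VM (G : ℕ) : lowestVector G ∈ VM G 0 := eV_mem_VM rfl

lemma Jm_lowestVector (G K : ℕ) : Jm G K (lowestVector G) = 0 := by
  rw [lowestVector, Jm_eV, eV_of_not (by omega), eV_of_not (by omega), smul_zero, smul_zero,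
    add_zero]

lemma Qcas_lowestVector (G K : ℕ) :
    Qcas G K (lowestVector G) = casimirValue (weight G K 0) • lowestVector G := by
  rw [Qcas_apply_of_mem_VM (lowestVector_mem_VM G), Jm_lowestVector, map_zero, add_zero]

lemma Qcas_Jp_pow_apply (G K s : ℕ) (w : W G) :
    Qcas G K ((Jp G K ^ s) w) = (Jp G K ^ s) (Qcas G K w) :=
  LinearMap.congr_fun ((commute_Qcas_Jp G K).pow_right s) w

lemma Qcas_Jp_pow_lowestVector (G K s : ℕ) :
    Qcas G K ((Jp G K ^ s) (lowestVector G)) =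
      casimirValue (weight G K 0) • (Jp G K ^ s) (lowestVector G) := by
  rw [Qcas_Jp_pow_apply, Qcas_lowestVector, map_smul]

lemma Jp_apply_zero_succ (G K : ℕ) (w : W G) (k : ℕ) :
    Jp G K w (0, k + 1) = Cp (jd K) (md K k) * w (0, k) := by
  suffices h : Finsupp.lapply (0, k + 1) ∘ₗ Jp G K =
      Cp (jd K) (md K k) • Finsupp.lapply (0, k) from LinearMap.congr_fun h w
  refine Finsupp.lhom_ext' fun p => LinearMap.ext_ring ?_
  have hleft : eV G ((p.1 : ℕ) + 1) p.2 1 (0, k + 1) = 0 := by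
    rw [← Nat.cast_succ, eV_natCast_apply, if_neg (by simp)]
  have hright : eV G (p.1 : ℕ) (p.2 + 1) 1 (0, k + 1) = Finsupp.single p (1 : ℂ) (0, k) := by
    rw [← Nat.cast_succ, eV_natCast_apply, ← eV_natCast p, eV_natCast_apply]
    simp only [Nat.succ_eq_add_one, add_left_inj]
  simp only [LinearMap.comp_apply, Finsupp.lsingle_apply, Finsupp.lapply_apply,
    LinearMap.smul_apply, smul_eq_mul]
  conv_lhs => rw [← eV_natCast p, Jp_eV]
  rw [Finsupp.add_apply, Finsupp.smul_apply, Finsupp.smul_apply, hleft, hright, smul_zero, zero_add,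
    smul_eq_mul, Finsupp.single_apply]
  split_ifs with hp
  · rw [hp, md, Int.cast_natCast]
  · rw [mul_zero, mul_zero]

lemma Jp_pow_lowestVector_ne_zero (G K s : ℕ) : (Jp G K ^ s) (lowestVector G) ≠ 0 := by
  suffices h : (Jp G K ^ s) (lowestVector G) (0, s) ≠ 0 from fun h0 => h (by simp [h0])
  induction s with
  | zero => simp [lowestVector, eV]
  | succ s ih =>
    rw [pow_succ', Module.End.mul_apply, Jp_apply_zero_succ]
    exact mul_ne_zero (Cp_jd_md_ne_zero K s) ih

lemma exists_jordan_chain_top {G K n : ℕ} (hK : K < G) (hn : G ≤ n + K) :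
    ∃ u ∈ VM G n, Qcas G K u =
      casimirValue (weight G K 0) • u + (Jp G K ^ n) (lowestVector G) := by
  obtain ⟨t, ht⟩ : ∃ t, G - K = t + 1 := ⟨G - K - 1, by omega⟩
  obtain ⟨s, rfl⟩ : ∃ s, n = t + 1 + s := ⟨n - (t + 1), by omega⟩
  have hmem : (Jp G K ^ t) (lowestVector G) ∈ VM G t := by
    simpa using Jp_pow_mem_VM (K := K) (lowestVector_mem_VM G) t
  obtain ⟨w, hw, hJm⟩ := VM_le_map_Jm G K t hmem
  have hQw : Qcas G K w =
      casimirValue (weight G K 0) • w + (Jp G K ^ (t + 1)) (lowestVector G) := by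
    rw [Qcas_apply_of_mem_VM hw, ← ht, weight_sub_eq_one_sub_weight_zero hK.le,
      casimirValue_one_sub, hJm, ht, pow_succ', Module.End.mul_apply]
  refine ⟨(Jp G K ^ s) w, Jp_pow_mem_VM hw s, ?_⟩
  rw [Qcas_Jp_pow_apply, hQw, map_add, map_smul, ← Module.End.mul_apply, ← pow_add, add_comm s]

theorem Qcas_not_diagonalizable_general {G K n : ℕ} (hK : K < G) (hn : G ≤ n + K)
    {p : Submodule ℂ (W G)} (hp : VM G n ≤ p) : ¬ DiagOn (Qcas G K) p := by
  intro hdiag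
  obtain ⟨u, hu, hQu⟩ := exists_jordan_chain_top hK hn
  exact Jp_pow_lowestVector_ne_zero G K n
    (hdiag.eq_zero_of_jordan_chain (hp hu) hQu (Qcas_Jp_pow_lowestVector G K n))

/-- For j ≤ γ-1, the restriction of 𝒬 to V_{j+1+γ} (which corresponds to
M' = 2γ = G) is not diagonalizable; consequently 𝒬 is not diagonalizable on F_γ ⊗ D⁺_j. -/
theorem Qcas_not_diagonalizable (G K : ℕ) (hG : 1 ≤ G)
    (hj : ((K : ℝ) - 1) / 2 ≤ (G : ℝ) / 2 - 1) :
    ¬ DiagOn (Qcas G K) (VM G G) ∧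
    ¬ DiagOn (Qcas G K) (⊤ : Submodule ℂ (W G)) := by
  have hK : K < G := by
    have : (K : ℝ) < G := by linarith
    exact_mod_cast this
  exact ⟨Qcas_not_diagonalizable_general hK (Nat.le_add_right G K) le_rfl,
    Qcas_not_diagonalizable_general hK (Nat.le_add_right G K) le_top⟩

end
end
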